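/- Define s_n as the coefficient of X^n in the polynomial ((1 + X + X^2)^n · (1 + X) : ℤ[X]) (sequence A005773, the constant term of (X^{-1} + 1 + X)^n (1 + X)), so that 2s_n = T_{n+1} + T_n for all n. Let p > 2 be a prime such that p does not divide the central trinomial coefficient T_n for any n < p. Then the natural density of {n ∈ ℕ : p ∣ s_n} exists and equals ( |{m < p−1 : T_m ≡ −T_{p−1}·T_{m+1} (mod p)}| + p·|{m < p−1 : T_m ≡ −T_{m+1} (mod p)}| ) / ((p−1)(p+1)); moreover this density is at least 1/(p−1). -/

import Mathlib

open Polynomial Filter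

/-- The central trinomial coefficient `T_n`:
the coefficient of `X^n` in `(1 + X + X^2)^n`. -/
noncomputable def centralTrinomial (n : ℕ) : ℤ :=
  ((1 + X + X ^ 2 : Polynomial ℤ) ^ n).coeff n

/-- Sequence A005773: the coefficient of X^n in (1+X+X^2)^n · (1+X)
(the constant term of (X⁻¹+1+X)^n (1+X)). -/
noncomputable def A005773 (n : ℕ) : ℤ :=
  (((1 + X + X ^ 2 : Polynomial ℤ) ^ n) * (1 + X)).coeff n

/-!
Write `T` for the central trinomial coefficients modulo `p`. They satisfy the Lucas congruence
`T (p * a + b) = T a * T b` for `b < p`, so when no `T n` vanishes, whether `T (n + 1) = c * T n`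
depends only on the last base-`p` digit of `n`, except that for the digit `p - 1` adding one
carries and the question becomes whether `T (a + 1) = c * T (p - 1) * T a` for `a = n / p`. Since
`T (p - 1) = ±1`, the conditions for `c` and `c * T (p - 1)` thus reduce to each other, which gives
two linear equations for their densities. Finally `2 * s n = T (n + 1) + T n` makes `p ∣ s n` the
case `c = -1`, and `n + 3 ∣ 6 * s n` supplies the solution `n = p - 3` behind the lower bound.
-/

section PairedDensity

/-- The coordinate `d` of the solution `(d, d')` of the linear system `d * p = b + d'`,
`d' * p = a + d`, where `d'` is obtained by exchanging `a` and `b`. The density of a set of natural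
numbers and that of its companion under `CarryReduces` solve such a system. -/
noncomputable def pairedDensity (p a b : ℝ) : ℝ :=
  (a + p * b) / ((p - 1) * (p + 1))

variable {p a b : ℝ}

lemma pairedDensity_mul (hp : 1 < p) (a b : ℝ) :
    pairedDensity p a b * p = b + pairedDensity p b a := by
  have : p - 1 ≠ 0 := by linarith
  have : p + 1 ≠ 0 := by linarith
  unfold pairedDensity
  field_simp
  ring

lemma pairedDensity_mem_Icc (hp : 1 < p) (ha : a ∈ Set.Icc 0 (p - 1))
    (hb : b ∈ Set.Icc 0 (p - 1)) : pairedDensity p a b ∈ Set.Icc 0 1 := by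
  obtain ⟨ha₀, ha₁⟩ := ha
  obtain ⟨hb₀, hb₁⟩ := hb
  have hden : 0 < (p - 1) * (p + 1) := by nlinarith
  refine ⟨by unfold pairedDensity; positivity, (div_le_one hden).2 ?_⟩
  nlinarith

lemma one_div_sub_one_le_pairedDensity (hp : 1 < p) (ha : 1 ≤ a) (hb : 1 ≤ b) :
    1 / (p - 1) ≤ pairedDensity p a b := by
  have : 0 < p - 1 := by linarith
  have : 0 < p + 1 := by linarith
  calc 1 / (p - 1) = (1 + p) / ((p - 1) * (p + 1)) := by field_simp; ring
    _ ≤ pairedDensity p a b := by unfold pairedDensity; gcongr; nlinarith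

end PairedDensity

section Logarithm

lemma tendsto_natLog_add_one_div (b : ℕ) :
    Tendsto (fun N : ℕ ↦ ((Nat.log b N : ℝ) + 1) / N) atTop (nhds 0) := by
  have hlog : Tendsto (fun N : ℕ ↦ (Real.log N / N) / Real.log b + 1 / N) atTop (nhds 0) := by
    simpa using ((Real.isLittleO_log_id_atTop.tendsto_div_nhds_zero.comp
      tendsto_natCast_atTop_atTop).div_const (Real.log b)).add
        (tendsto_const_div_atTop_nhds_zero_nat (1 : ℝ))
  refine squeeze_zero (fun N ↦ by positivity) (fun N ↦ ?_) hlog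
  rw [add_div, div_right_comm]
  gcongr
  exact Real.natLog_le_logb N b

lemma le_mul_natLog_add_one {p : ℕ} (hp : 1 < p) {f : ℕ → ℝ} {K : ℝ} (hf₀ : f 0 ≤ 0)
    (hf : ∀ N, f N ≤ f (N / p) + K) (N : ℕ) : f N ≤ K * (Nat.log p N + 1) := by
  induction N using Nat.strong_induction_on with
  | _ N ih =>
    rcases lt_or_ge N p with hN | hN
    · have := hf N
      rw [Nat.div_eq_of_lt hN] at this
      rw [Nat.log_of_lt hN]
      push_cast
      linarith
    · have := ih (N / p) (Nat.div_lt_self (by lia) hp)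
      rw [Nat.log_of_one_lt_of_le hp hN]
      push_cast
      linarith [hf N]

end Logarithm

section Discrepancy

/-- The error made when the number of elements of `S` below `N` is estimated as `d * N`. That it is
`o(N)` means that `S` has natural density `d`. -/
noncomputable def discrepancy (S : ℕ → Prop) [DecidablePred S] (d : ℝ) (N : ℕ) : ℝ :=
  Nat.count S N - d * N

/-- Membership of `n` in `S` is decided by the last base-`p` digit of `n`, unless this digit is
`p - 1` (the case where `n + 1` carries), when it is membership of `n / p` in `S'`. -/
structure CarryReduces (p : ℕ) (S S' : ℕ → Prop) : Prop where
  iff_of_lt (a : ℕ) {b : ℕ} (hb : b < p - 1) : S (p * a + b) ↔ S b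
  iff_of_last (a : ℕ) : S (p * a + (p - 1)) ↔ S' a

variable {S S' : ℕ → Prop} [DecidablePred S] [DecidablePred S'] {d d' : ℝ}

@[simp]
lemma discrepancy_zero : discrepancy S d 0 = 0 := by
  simp [discrepancy]

lemma abs_discrepancy_add_le (hd : d ∈ Set.Icc 0 1) (m c : ℕ) :
    |discrepancy S d (m + c)| ≤ |discrepancy S d m| + c := by
  obtain ⟨hd₀, hd₁⟩ := hd
  set k := Nat.count (fun i ↦ S (m + i)) c
  have hk : (k : ℝ) ≤ c := by exact_mod_cast Nat.count_le _
  have hsplit : discrepancy S d (m + c) = discrepancy S d m + (k - d * c) := by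
    unfold discrepancy
    rw [Nat.count_add]
    push_cast
    ring
  calc |discrepancy S d (m + c)| ≤ |discrepancy S d m| + |k - d * c| := hsplit ▸ abs_add_le _ _
    _ ≤ |discrepancy S d m| + c := by
        gcongr
        exact abs_sub_le_of_nonneg_of_le k.cast_nonneg hk (by positivity)
          (mul_le_of_le_one_left c.cast_nonneg hd₁)

lemma tendsto_count_div_of_abs_discrepancy_le {p : ℕ} {K : ℝ}
    (h : ∀ N, |discrepancy S d N| ≤ K * (Nat.log p N + 1)) :
    Tendsto (fun N : ℕ ↦ (Nat.count S N : ℝ) / N) atTop (nhds d) := by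
  have herr : Tendsto (fun N : ℕ ↦ discrepancy S d N / N) atTop (nhds 0) := by
    refine squeeze_zero_norm (fun N ↦ ?_)
      (by simpa using (tendsto_natLog_add_one_div p).const_mul K)
    rw [norm_div, Real.norm_eq_abs, RCLike.norm_natCast, ← mul_div_assoc]
    gcongr
    exact h N
  refine (add_zero d ▸ herr.const_add d).congr' ?_
  filter_upwards [eventually_ne_atTop 0] with N hN
  unfold discrepancy
  field_simp
  ring

namespace CarryReduces

variable {p : ℕ}

lemma count_mul (hp : 0 < p) (h : CarryReduces p S S') (M : ℕ) :
    Nat.count S (p * M) = M * Nat.count S (p - 1) + Nat.count S' M := by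
  induction M with
  | zero => simp
  | succ M ih =>
    have hblock : Nat.count (fun b ↦ S (p * M + b)) (p - 1) = Nat.count S (p - 1) :=
      le_antisymm (Nat.count_mono_left fun _ hb ↦ (h.iff_of_lt M hb).1)
        (Nat.count_mono_left fun _ hb ↦ (h.iff_of_lt M hb).2)
    rw [show p * (M + 1) = p * M + (p - 1) + 1 by rw [mul_add]; lia, Nat.count_succ,
      Nat.count_add, ih, hblock, Nat.count_succ]
    simp only [h.iff_of_last]
    ring

lemma discrepancy_mul (hp : 0 < p) (h : CarryReduces p S S')
    (hd : d * p = Nat.count S (p - 1) + d') (M : ℕ) :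
    discrepancy S d (p * M) = discrepancy S' d' M := by
  unfold discrepancy
  rw [h.count_mul hp]
  push_cast
  linear_combination -(M : ℝ) * hd

lemma abs_discrepancy_le (hp : 0 < p) (h : CarryReduces p S S') (hd : d ∈ Set.Icc 0 1)
    (hdd' : d * p = Nat.count S (p - 1) + d') (N : ℕ) :
    |discrepancy S d N| ≤ |discrepancy S' d' (N / p)| + p := by
  calc |discrepancy S d N| = |discrepancy S d (p * (N / p) + N % p)| := by rw [Nat.div_add_mod]
    _ ≤ |discrepancy S d (p * (N / p))| + (N % p : ℕ) := abs_discrepancy_add_le hd _ _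
    _ ≤ |discrepancy S' d' (N / p)| + p := by
        rw [h.discrepancy_mul hp hdd']
        gcongr
        exact (Nat.mod_lt N hp).le

theorem tendsto_count_div (hp : 1 < p) (h : CarryReduces p S S') (h' : CarryReduces p S' S) :
    Tendsto (fun N : ℕ ↦ (Nat.count S N : ℝ) / N) atTop
      (nhds (pairedDensity p (Nat.count S' (p - 1)) (Nat.count S (p - 1)))) := by
  have hp₀ : 0 < p := by lia
  have hp₁ : (1 : ℝ) < p := by exact_mod_cast hp
  have hcount (U : ℕ → Prop) [DecidablePred U] :
      (Nat.count U (p - 1) : ℝ) ∈ Set.Icc 0 ((p : ℝ) - 1) :=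
    ⟨by positivity, by rw [← Nat.cast_pred hp₀]; exact_mod_cast Nat.count_le _⟩
  set a := (Nat.count S' (p - 1) : ℝ)
  set b := (Nat.count S (p - 1) : ℝ)
  set D : ℕ → ℝ := discrepancy S (pairedDensity p a b)
  set D' : ℕ → ℝ := discrepancy S' (pairedDensity p b a)
  have hD (N : ℕ) : |D N| ≤ |D' (N / p)| + p :=
    h.abs_discrepancy_le hp₀ (pairedDensity_mem_Icc hp₁ (hcount S') (hcount S))
      (pairedDensity_mul hp₁ a b) N
  have hD' (N : ℕ) : |D' N| ≤ |D (N / p)| + p :=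
    h'.abs_discrepancy_le hp₀ (pairedDensity_mem_Icc hp₁ (hcount S) (hcount S'))
      (pairedDensity_mul hp₁ b a) N
  have hmax (N : ℕ) : max |D N| |D' N| ≤ p * (Nat.log p N + 1) :=
    le_mul_natLog_add_one (f := fun N ↦ max |D N| |D' N|) hp (by simp [D, D'])
      (fun N ↦ max_le ((hD N).trans (by gcongr; exact le_max_right _ _))
        ((hD' N).trans (by gcongr; exact le_max_left _ _))) N
  exact tendsto_count_div_of_abs_discrepancy_le fun N ↦ (le_max_left _ _).trans (hmax N)

end CarryReduces

end Discrepancy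

section Lucas

/-- The Lucas property to base `p`: `t n` is the product of the values of `t` at the base-`p`
digits of `n`, stated as the rule for splitting off the last digit. -/
def IsLucas {R : Type*} [Mul R] (p : ℕ) (t : ℕ → R) : Prop :=
  ∀ a, ∀ b < p, t (p * a + b) = t a * t b

/-- `t (n + 1)` is `c` times `t n`, as a predicate on `n`. It stands for the condition
`t (n + 1) / t n = c` when `t` does not vanish. -/
def HasRatio {R : Type*} [Mul R] (t : ℕ → R) (c : R) (n : ℕ) : Prop :=
  t (n + 1) = c * t n

namespace IsLucas

variable {R : Type*} [CommMonoidWithZero R] {p : ℕ} {t : ℕ → R}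

lemma ne_zero [NoZeroDivisors R] (h : IsLucas p t) (hp : 1 < p) (ht : ∀ n < p, t n ≠ 0) (n : ℕ) :
    t n ≠ 0 := by
  induction n using Nat.strong_induction_on with
  | _ n ih =>
    rcases lt_or_ge n p with hn | hn
    · exact ht n hn
    · have hmod : n % p < p := Nat.mod_lt n (by lia)
      rw [← Nat.div_add_mod n p, h _ _ hmod]
      exact mul_ne_zero (ih _ (Nat.div_lt_self (by lia) hp)) (ht _ hmod)

variable [IsCancelMulZero R]

lemma map_zero (h : IsLucas p t) (hp : 0 < p) (ht : t 0 ≠ 0) : t 0 = 1 :=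
  mul_left_cancel₀ ht (by simpa using (h 0 0 hp).symm)

lemma carryReduces_hasRatio (h : IsLucas p t) (hp : 0 < p) (ht : ∀ n, t n ≠ 0) (c : R) :
    CarryReduces p (HasRatio t c) (HasRatio t (c * t (p - 1))) where
  iff_of_lt a b hb := by
    unfold HasRatio
    rw [add_assoc, h a (b + 1) (by lia), h a b (by lia), mul_left_comm, mul_right_inj' (ht a)]
  iff_of_last a := by
    have hcarry : t (p * a + (p - 1) + 1) = t (a + 1) := by
      rw [show p * a + (p - 1) + 1 = p * (a + 1) + 0 by rw [mul_add]; lia, h _ 0 hp,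
        h.map_zero hp (ht 0), mul_one]
    unfold HasRatio
    rw [hcarry, h a (p - 1) (by lia), mul_comm (t a), mul_assoc]

open scoped Classical in
theorem tendsto_count_hasRatio_div (h : IsLucas p t) (hp : 1 < p) (ht : ∀ n, t n ≠ 0)
    (hlast : t (p - 1) * t (p - 1) = 1) (c : R) :
    Tendsto (fun N : ℕ ↦ (Nat.count (HasRatio t c) N : ℝ) / N) atTop
      (nhds (pairedDensity p (Nat.count (HasRatio t (c * t (p - 1))) (p - 1))
        (Nat.count (HasRatio t c) (p - 1)))) := by
  have hp₀ : 0 < p := by lia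
  have hback := h.carryReduces_hasRatio hp₀ ht (c * t (p - 1))
  rw [mul_assoc, hlast, mul_one] at hback
  exact (h.carryReduces_hasRatio hp₀ ht c).tendsto_count_div hp hback

end IsLucas

end Lucas

section PolynomialCoefficients

lemma coeff_X_mul_derivative {R : Type*} [Semiring R] (f : R[X]) (n : ℕ) :
    (X * derivative f).coeff n = n * f.coeff n := by
  cases n with
  | zero => simp
  | succ n => rw [coeff_X_mul, coeff_derivative, ← Nat.cast_succ, Nat.cast_comm]

lemma coeff_eq_of_X_pow_dvd_mul_sub_one {R : Type*} [CommRing R] {f : R[X]}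
    {n : ℕ} (h : X ^ n ∣ (1 + X + X ^ 2) * f - 1) {j : ℕ} (hj : j < n) :
    f.coeff j = if j % 3 = 0 then 1 else if j % 3 = 1 then -1 else 0 := by
  have hdvd : X ^ n ∣ f - X ^ 3 * f - (1 - X) := by
    convert h.mul_left (1 - X) using 1
    ring
  rw [X_pow_dvd_iff] at hdvd
  induction j using Nat.strong_induction_on with
  | _ j ih =>
    have hj' := hdvd j hj
    simp only [coeff_sub] at hj'
    match j with
    | 0 => simpa [coeff_X_pow_mul', sub_eq_zero] using hj'
    | 1 => simpa [coeff_X_pow_mul', coeff_one, add_eq_zero_iff_eq_neg] using hj'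
    | 2 => simpa [coeff_X_pow_mul', coeff_one, coeff_X] using hj'
    | j + 3 =>
      have hperiod : f.coeff (j + 3) = f.coeff j := by
        simpa [coeff_X_pow_mul, coeff_one, coeff_X, sub_eq_zero] using hj'
      rw [hperiod, ih j (by lia) (by lia), Nat.add_mod_right]

end PolynomialCoefficients

section FiniteField

variable {K : Type*} [Field K] [Fintype K]

lemma isLucas_coeff_pow {f : K[X]} (hf : f.natDegree ≤ 2) :
    IsLucas (Fintype.card K) fun n ↦ (f ^ n).coeff n := by
  intro a b hb
  set q := Fintype.card K
  have hq : 0 < q := Fintype.card_pos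
  have hdeg : (f ^ b).natDegree ≤ b * 2 := natDegree_pow_le_of_le b hf
  have hpow : f ^ (q * a + b) = expand K q (f ^ a) * f ^ b := by
    rw [FiniteField.expand_card, pow_add, ← pow_mul, mul_comm a]
  calc (f ^ (q * a + b)).coeff (q * a + b)
      = (expand K q (f ^ a)).coeff (q * a) * (f ^ b).coeff b := by
        rw [hpow, coeff_mul]
        refine Finset.sum_eq_single_of_mem (q * a, b) (by simp) ?_
        rintro ⟨i, j⟩ hij hne
        rw [Finset.HasAntidiagonal.mem_antidiagonal] at hij
        by_cases hi : q ∣ i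
        · obtain ⟨k, rfl⟩ := hi
          have hle : k ≤ a := by
            by_contra! hak
            nlinarith [Nat.mul_le_mul_left q hak]
          have hlt : k < a := hle.lt_of_ne (by rintro rfl; exact hne (by grind))
          -- The remaining `j ≥ b + q` lies beyond the degree of `f ^ b`.
          have hj : b * 2 < j := by
            nlinarith [Nat.mul_le_mul_left q hlt]
          rw [coeff_eq_zero_of_natDegree_lt (hdeg.trans_lt hj), mul_zero]
        · rw [coeff_expand hq, if_neg hi, zero_mul]
    _ = (f ^ a).coeff a * (f ^ b).coeff b := by rw [coeff_expand_mul' hq]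

theorem coeff_one_add_X_add_X_sq_pow_card_sub_one :
    ((1 + X + X ^ 2 : K[X]) ^ (Fintype.card K - 1)).coeff (Fintype.card K - 1) =
      if Fintype.card K % 3 = 1 then 1 else if Fintype.card K % 3 = 2 then -1 else 0 := by
  set q := Fintype.card K
  have hq : 0 < q := Fintype.card_pos
  have hinv : X ^ q ∣ (1 + X + X ^ 2 : K[X]) * (1 + X + X ^ 2) ^ (q - 1) - 1 := by
    refine ⟨1 + X ^ q, ?_⟩
    rw [mul_pow_sub_one hq.ne', ← FiniteField.expand_card]
    simp only [map_add, map_one, expand_X, map_pow, q]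
    ring
  rw [coeff_eq_of_X_pow_dvd_mul_sub_one hinv (by lia)]
  grind

end FiniteField

section CentralTrinomial

lemma intCast_centralTrinomial (R : Type*) [CommRing R] (n : ℕ) :
    (centralTrinomial n : R) = ((1 + X + X ^ 2 : R[X]) ^ n).coeff n := by
  have := coeff_map (Int.castRingHom R) (p := (1 + X + X ^ 2 : ℤ[X]) ^ n) n
  simpa [centralTrinomial] using this.symm

lemma centralTrinomial_succ (n : ℕ) :
    centralTrinomial (n + 1) = ((1 + X + X ^ 2 : ℤ[X]) ^ n * (1 + 2 * X)).coeff n := by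
  have hderiv : derivative ((1 + X + X ^ 2 : ℤ[X]) ^ (n + 1)) =
      C ((n : ℤ) + 1) * ((1 + X + X ^ 2) ^ n * (1 + 2 * X)) := by
    rw [derivative_pow_succ]
    simp only [eq_intCast, Int.cast_add, Int.cast_natCast, Int.cast_one, derivative_add,
      derivative_one, derivative_X, zero_add, derivative_X_pow_succ, Nat.cast_one, Int.reduceAdd,
      Int.cast_ofNat, pow_one]
    ring
  have hcoeff := coeff_derivative ((1 + X + X ^ 2 : ℤ[X]) ^ (n + 1)) n
  rw [hderiv, coeff_C_mul, mul_comm] at hcoeff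
  exact (mul_right_cancel₀ (by positivity) hcoeff).symm

lemma two_mul_A005773 (n : ℕ) :
    2 * A005773 n = centralTrinomial (n + 1) + centralTrinomial n := by
  rw [centralTrinomial_succ, A005773, centralTrinomial, ← coeff_add, ← coeff_C_mul]
  congr 1
  simp only [map_ofNat]
  ring

theorem add_three_dvd_six_mul_A005773 (n : ℕ) : (n + 3 : ℤ) ∣ 6 * A005773 n := by
  set P : ℤ[X] := 1 + X + X ^ 2 with hP
  set F : ℤ[X] := (2 + X) * P ^ (n + 1) with hF
  -- `X * F' - n * F` has vanishing `n`-th coefficient.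
  have hid : C 6 * (P ^ n * (1 + X)) =
      X * derivative F - C (n : ℤ) * F + C (n + 3 : ℤ) * (P ^ n * ((X + 2) * (1 - X ^ 2))) := by
    rw [hF, derivative_mul, derivative_pow_succ]
    simp only [eq_intCast, Int.cast_ofNat, hP, derivative_add, derivative_ofNat, derivative_X,
      zero_add, one_mul, Int.cast_add, Int.cast_natCast, Int.cast_one, derivative_one,
      derivative_X_pow_succ, Nat.cast_one, Int.reduceAdd, pow_one, map_natCast]
    ring
  refine ⟨(P ^ n * ((X + 2) * (1 - X ^ 2))).coeff n, ?_⟩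
  have := congrArg (coeff · n) hid
  simpa only [A005773, ← hP, coeff_add, coeff_sub, coeff_C_mul, coeff_X_mul_derivative, sub_self,
    zero_add] using this

lemma add_three_dvd_A005773 {n : ℕ} (hn : (n + 3).Coprime 6) : ((n + 3 : ℕ) : ℤ) ∣ A005773 n :=
  (Nat.isCoprime_iff_coprime.2 hn).dvd_of_dvd_mul_left
    (by exact_mod_cast add_three_dvd_six_mul_A005773 n)

end CentralTrinomial

section ModPrime

variable (p : ℕ)

/-- The central trinomial coefficients modulo `p`. -/
noncomputable def centralTrinomialMod (n : ℕ) : ZMod p :=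
  centralTrinomial n

variable {p}

lemma dvd_A005773_iff (hp : Odd p) (n : ℕ) :
    (p : ℤ) ∣ A005773 n ↔ HasRatio (centralTrinomialMod p) (-1) n := by
  have hcop : IsCoprime (p : ℤ) 2 := Nat.isCoprime_iff_coprime.2 (Nat.coprime_two_right.2 hp)
  have hdvd : (p : ℤ) ∣ A005773 n ↔ (p : ℤ) ∣ 2 * A005773 n :=
    ⟨(·.mul_left 2), hcop.dvd_of_dvd_mul_left⟩
  rw [hdvd, two_mul_A005773, ← ZMod.intCast_zmod_eq_zero_iff_dvd, Int.cast_add, HasRatio,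
    neg_one_mul]
  exact add_eq_zero_iff_eq_neg

lemma modEq_neg_iff (n : ℕ) :
    centralTrinomial n ≡ -centralTrinomial (n + 1) [ZMOD p] ↔
      HasRatio (centralTrinomialMod p) (-1) n := by
  rw [← ZMod.intCast_eq_intCast_iff, Int.cast_neg, HasRatio, neg_one_mul]
  exact eq_comm.trans neg_eq_iff_eq_neg

lemma modEq_neg_mul_iff
    (h : centralTrinomialMod p (p - 1) * centralTrinomialMod p (p - 1) = 1) (n : ℕ) :
    centralTrinomial n ≡ -(centralTrinomial (p - 1) * centralTrinomial (n + 1)) [ZMOD p] ↔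
      HasRatio (centralTrinomialMod p) (-1 * centralTrinomialMod p (p - 1)) n := by
  rw [← ZMod.intCast_eq_intCast_iff, Int.cast_neg, Int.cast_mul, HasRatio]
  change centralTrinomialMod p n =
    -(centralTrinomialMod p (p - 1) * centralTrinomialMod p (n + 1)) ↔ _
  grind

lemma centralTrinomialMod_zero : centralTrinomialMod p 0 = 1 := by
  simp [centralTrinomialMod, intCast_centralTrinomial]

lemma centralTrinomialMod_one : centralTrinomialMod p 1 = 1 := by
  simp [centralTrinomialMod, intCast_centralTrinomial, coeff_one, coeff_X_pow]

variable [Fact p.Prime]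

lemma isLucas_centralTrinomialMod : IsLucas p (centralTrinomialMod p) := by
  have hdeg : (1 + X + X ^ 2 : (ZMod p)[X]).natDegree ≤ 2 := by compute_degree
  have h := isLucas_coeff_pow hdeg
  rw [ZMod.card] at h
  simp only [← intCast_centralTrinomial] at h
  exact h

lemma centralTrinomialMod_sub_one :
    centralTrinomialMod p (p - 1) = if p % 3 = 1 then 1 else if p % 3 = 2 then -1 else 0 := by
  have h := coeff_one_add_X_add_X_sq_pow_card_sub_one (K := ZMod p)
  rwa [ZMod.card, ← intCast_centralTrinomial] at h

lemma centralTrinomialMod_sub_one_eq_one_or_neg_one (h : centralTrinomialMod p (p - 1) ≠ 0) :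
    centralTrinomialMod p (p - 1) = 1 ∨ centralTrinomialMod p (p - 1) = -1 := by
  grind [centralTrinomialMod_sub_one (p := p)]

lemma ne_three_of_centralTrinomialMod_sub_one_ne_zero (h : centralTrinomialMod p (p - 1) ≠ 0) :
    p ≠ 3 := by
  rintro rfl
  exact h (by simpa using centralTrinomialMod_sub_one (p := 3))

open scoped Classical in
lemma count_hasRatio_neg_one_pos (h : centralTrinomialMod p (p - 1) ≠ 0) (hp : 2 < p) :
    0 < Nat.count (HasRatio (centralTrinomialMod p) (-1)) (p - 1) := by
  have hprime : p.Prime := Fact.out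
  have hcop : (p - 3 + 3).Coprime 6 := by
    rw [Nat.sub_add_cancel hp]
    exact Nat.Coprime.mul_right ((Nat.coprime_primes hprime Nat.prime_two).2 hp.ne')
      ((Nat.coprime_primes hprime Nat.prime_three).2
        (ne_three_of_centralTrinomialMod_sub_one_ne_zero h))
  have hdvd := add_three_dvd_A005773 hcop
  rw [Nat.sub_add_cancel hp, dvd_A005773_iff (hprime.odd_of_ne_two hp.ne')] at hdvd
  exact Nat.pos_of_ne_zero (Nat.count_ne_iff_exists.2 ⟨p - 3, by lia, hdvd⟩)

open scoped Classical in
lemma count_hasRatio_neg_one_mul_pos (h : centralTrinomialMod p (p - 1) ≠ 0) (hp : 2 < p) :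
    0 < Nat.count (HasRatio (centralTrinomialMod p) (-1 * centralTrinomialMod p (p - 1)))
      (p - 1) := by
  rcases centralTrinomialMod_sub_one_eq_one_or_neg_one h with hε | hε
  · rw [hε, mul_one]
    exact count_hasRatio_neg_one_pos h hp
  · have hzero : HasRatio (centralTrinomialMod p) (-1 * -1) 0 := by
      rw [HasRatio, centralTrinomialMod_one, centralTrinomialMod_zero]
      ring
    rw [hε]
    exact Nat.pos_of_ne_zero (Nat.count_ne_iff_exists.2 ⟨0, by lia, hzero⟩)

end ModPrime

open scoped Classical in
theorem stmt18 (p : ℕ) (hp : p.Prime) (hp2 : 2 < p)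
    (hT : ∀ n < p, ¬ (p : ℤ) ∣ centralTrinomial n) :
    Tendsto
      (fun N : ℕ =>
        (((Finset.range N).filter (fun n => (p : ℤ) ∣ A005773 n)).card : ℝ) / N)
      atTop
      (nhds
        (((((Finset.range (p - 1)).filter
            (fun m => centralTrinomial m ≡
              -(centralTrinomial (p - 1) * centralTrinomial (m + 1)) [ZMOD (p : ℤ)])).card : ℝ) +
          (p : ℝ) * (((Finset.range (p - 1)).filter
            (fun m => centralTrinomial m ≡ -centralTrinomial (m + 1) [ZMOD (p : ℤ)])).card : ℝ)) /
          (((p : ℝ) - 1) * ((p : ℝ) + 1)))) ∧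
    1 / ((p : ℝ) - 1) ≤
      ((((Finset.range (p - 1)).filter
          (fun m => centralTrinomial m ≡
            -(centralTrinomial (p - 1) * centralTrinomial (m + 1)) [ZMOD (p : ℤ)])).card : ℝ) +
        (p : ℝ) * (((Finset.range (p - 1)).filter
          (fun m => centralTrinomial m ≡ -centralTrinomial (m + 1) [ZMOD (p : ℤ)])).card : ℝ)) /
        (((p : ℝ) - 1) * ((p : ℝ) + 1)) := by
  have : Fact p.Prime := ⟨hp⟩
  set t := centralTrinomialMod p
  have ht : ∀ n, t n ≠ 0 := isLucas_centralTrinomialMod.ne_zero hp.one_lt fun n hn ↦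
    mt (ZMod.intCast_zmod_eq_zero_iff_dvd _ p).1 (hT n hn)
  have hlast : t (p - 1) * t (p - 1) = 1 :=
    mul_self_eq_one_iff.2 (centralTrinomialMod_sub_one_eq_one_or_neg_one (ht _))
  simp only [dvd_A005773_iff (hp.odd_of_ne_two hp2.ne'), modEq_neg_iff, modEq_neg_mul_iff hlast,
    ← Nat.count_eq_card_filter_range]
  exact ⟨isLucas_centralTrinomialMod.tendsto_count_hasRatio_div hp.one_lt ht hlast (-1),
    one_div_sub_one_le_pairedDensity (by exact_mod_cast hp.one_lt)
      (by exact_mod_cast count_hasRatio_neg_one_mul_pos (ht _) hp2)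
      (by exact_mod_cast count_hasRatio_neg_one_pos (ht _) hp2)⟩
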